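/- Let N ⊆ E be a closed subset, let U ⊆ E be open, let ψ ∈ Ham(U) (so ψ equals the identity outside a compact subset of U), and let φ ∈ Ham(E) satisfy φ(closure of U) ∩ N = ∅. Then the commutator satisfies (ψ∘φ∘ψ⁻¹∘φ⁻¹)(N) = ψ(N) and ‖ψ∘φ∘ψ⁻¹∘φ⁻¹‖_E ≤ 2‖φ‖_E. -/

import Mathlib

/-!
The identity of sets is elementary: if `x ∈ N`, then `φ⁻¹ x ∉ U`, so `ψ⁻¹` fixes `φ⁻¹ x` and
`ψ φ ψ⁻¹ φ⁻¹ x = ψ x`.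

For the energy bound, write the commutator as `(ψ φ ψ⁻¹) ∘ φ⁻¹`. If `H` generates `φ`, then
`-H(1 - t, ·)`, run along the reversed flow, generates `φ⁻¹`, and `H(t, ψ⁻¹ ·)` generates
`ψ φ ψ⁻¹`, because `ψ` is a symplectomorphism. Running the two one after the other, each at double
speed, is the flow of the single Hamiltonian
`K(t, z) = -2 H(1 - 2 t, z) + 2 H(2 t - 1, ψ⁻¹ z)` (`commH`): since `H` vanishes for times outside
`(0, 1)`, on each half of `[0, 1]` only one of the two summands is present. Its energy is `2 ‖H‖` (`HNorm_commH`), and taking the infimum over `H` gives the bound.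

What needs work is that `ψ` and `ψ⁻¹` are smooth and symplectic (`ham_smooth_symplectic`), which
rests on smooth dependence of flows on initial conditions and the variational equation
(`flow_smooth`). A trajectory solves an integral equation `G(γ) = (initial data)` in the Banach
space of continuous curves on `[0, 1]`. Superposition operators `γ ↦ X(t, γ(t))` are smooth there
(`contDiff_nem`), and after rescaling curves by `e^{-λt}` the derivative of `G` is within distance
`1/2` of the identity, so the inverse function theorem shows that the trajectory depends smoothly
on its starting point, and differentiating the integral equation gives the variational equation.
Preservation of `ω₀` then follows from the symmetry of the Hessian of `H`.
-/

open scoped ENNReal Topology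

noncomputable section

/-- The standard symplectic vector space `E = ℝⁿ × ℝⁿ`. -/
abbrev E (n : ℕ) := (Fin n → ℝ) × (Fin n → ℝ)

/-- The standard symplectic form `ω₀((x,y),(x',y')) = ⟨x,y'⟩ − ⟨y,x'⟩`. -/
def omega0 (n : ℕ) (z w : E n) : ℝ :=
  (∑ i, z.1 i * w.2 i) - ∑ i, z.2 i * w.1 i

/-- The Hamiltonian vector field `X_{H_t}(x,y) = (∂_y H(t,x,y), −∂_x H(t,x,y))`. -/
def XH (n : ℕ) (H : ℝ × E n → ℝ) (t : ℝ) (z : E n) : E n :=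
  ((fun i => fderiv ℝ (fun w => H (t, w)) z (0, Pi.single i 1)),
   (fun i => -fderiv ℝ (fun w => H (t, w)) z (Pi.single i 1, 0)))

/-- `Φ` is the Hamiltonian flow of `H`: `Φ 0 = id` and `(d/dt) Φ t z = X_{H_t} (Φ t z)`. -/
def IsHamFlow (n : ℕ) (H : ℝ × E n → ℝ) (Φ : ℝ → E n → E n) : Prop :=
  (∀ z, Φ 0 z = z) ∧ ∀ z t, HasDerivAt (fun s => Φ s z) (XH n H t (Φ t z)) t

/-- `H : ℝ × E → ℝ` is smooth with support a compact subset of `[0,1] × W`. -/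
def AdmissibleH (n : ℕ) (W : Set (E n)) (H : ℝ × E n → ℝ) : Prop :=
  ContDiff ℝ (⊤ : ℕ∞) H ∧ IsCompact (tsupport H) ∧
    tsupport H ⊆ Set.Icc (0 : ℝ) 1 ×ˢ W

/-- `Ham(W)`: time-one maps of Hamiltonian flows of admissible Hamiltonians. -/
def HamGrp (n : ℕ) (W : Set (E n)) : Set (E n → E n) :=
  {φ | ∃ H Φ, AdmissibleH n W H ∧ IsHamFlow n H Φ ∧ φ = Φ 1}

/-- `‖H‖ = ∫₀¹ (sup H(t,·) − inf H(t,·)) dt`. -/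
def HNorm (n : ℕ) (H : ℝ × E n → ℝ) : ℝ :=
  ∫ t in (0:ℝ)..(1:ℝ),
    (sSup (Set.range fun z => H (t, z)) - sInf (Set.range fun z => H (t, z)))

/-- The Hofer norm `‖φ‖_W` of `φ ∈ Ham(W)`. -/
def hoferNorm (n : ℕ) (W : Set (E n)) (φ : E n → E n) : ℝ :=
  sInf {c | ∃ H Φ, AdmissibleH n W H ∧ IsHamFlow n H Φ ∧ φ = Φ 1 ∧ c = HNorm n H}

/-- The displacement energy `e_W(U,N)`, valued in `ℝ≥0∞` (so `inf ∅ = ⊤`).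
`closure U ∩ W` is the closure of `U` in `W`. -/
def dispE (n : ℕ) (W U N : Set (E n)) : ℝ≥0∞ :=
  sInf {c | ∃ φ ∈ HamGrp n W, φ '' (closure U ∩ W) ∩ N = ∅ ∧
    c = ENNReal.ofReal (hoferNorm n W φ)}

/-- `p` is rigid with respect to `N` in `W`. -/
def RigidWrt (n : ℕ) (W N : Set (E n)) (p : E n) : Prop :=
  ∀ U : Set (E n), IsOpen U → p ∈ U → U ⊆ W → 0 < dispE n W U N

/-- `N` is a subset of `W` which is closed as a subset of `W`. -/
def ClosedIn (n : ℕ) (W N : Set (E n)) : Prop :=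
  N ⊆ W ∧ closure N ∩ W ⊆ N

/-- `N` is locally closed. -/
def LocallyClosedSet (n : ℕ) (N : Set (E n)) : Prop :=
  ∀ q ∈ N, ∃ V : Set (E n), IsOpen V ∧ q ∈ V ∧ ClosedIn n V (N ∩ V)

/-- `p` is locally rigid with respect to `N`. -/
def LocRigid (n : ℕ) (N : Set (E n)) (p : E n) : Prop :=
  ∃ W : Set (E n), IsOpen W ∧ p ∈ W ∧ ClosedIn n W (N ∩ W) ∧
    RigidWrt n W (N ∩ W) p

/-- `ψ` is a symplectomorphism from the open set `W` onto its (open) image. -/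
def IsSymplecto (n : ℕ) (W : Set (E n)) (ψ : E n → E n) : Prop :=
  IsOpen W ∧ IsOpen (ψ '' W) ∧ Set.InjOn ψ W ∧ ContDiffOn ℝ (⊤ : ℕ∞) ψ W ∧
  (∃ g : E n → E n, ContDiffOn ℝ (⊤ : ℕ∞) g (ψ '' W) ∧ ∀ z ∈ W, g (ψ z) = z) ∧
  ∀ z ∈ W, ∀ u v, omega0 n (fderiv ℝ ψ z u) (fderiv ℝ ψ z v) = omega0 n u v

/-- `ψ` is a symplectic homeomorphism of `E`: a homeomorphism which is a `C⁰`-limit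
(uniformly on compact sets, together with inverses) of symplectomorphisms of `E` onto `E`. -/
def IsSympHomeo (n : ℕ) (ψ : E n ≃ₜ E n) : Prop :=
  ∃ Ψ : ℕ → E n ≃ E n,
    (∀ m, IsSymplecto n Set.univ (Ψ m)) ∧
    TendstoLocallyUniformly (fun m z => Ψ m z) (fun z => ψ z) Filter.atTop ∧
    TendstoLocallyUniformly (fun m z => (Ψ m).symm z) (fun z => ψ.symm z) Filter.atTop

/-- A fixed `k`-dimensional coordinate subspace `ℝᵏ × {0}` of `E`. -/
def coordSubspace (n k : ℕ) : Set (E n) :=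
  {z | (∀ i : Fin n, k ≤ (i : ℕ) → z.1 i = 0) ∧
       (∀ i : Fin n, k ≤ n + (i : ℕ) → z.2 i = 0)}

/-- `N` is a smooth `k`-dimensional submanifold of `E`. -/
def IsSubmanifold (n k : ℕ) (N : Set (E n)) : Prop :=
  ∀ p ∈ N, ∃ (V : Set (E n)) (Φ : E n → E n),
    IsOpen V ∧ p ∈ V ∧ IsOpen (Φ '' V) ∧ Set.InjOn Φ V ∧
    ContDiffOn ℝ (⊤ : ℕ∞) Φ V ∧
    (∃ g : E n → E n, ContDiffOn ℝ (⊤ : ℕ∞) g (Φ '' V) ∧ ∀ z ∈ V, g (Φ z) = z) ∧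
    Φ '' (N ∩ V) = coordSubspace n k ∩ Φ '' V

/-- The tangent space `T_pN`, as velocities of curves through `p` lying locally in `N`. -/
def TangentSet (n : ℕ) (N : Set (E n)) (p : E n) : Set (E n) :=
  {v | ∃ γ : ℝ → E n, γ 0 = p ∧ (∀ᶠ t in 𝓝 (0:ℝ), γ t ∈ N) ∧ HasDerivAt γ v 0}

/-- The symplectic orthogonal complement `T^{ω₀}`. -/
def symplOrth (n : ℕ) (T : Set (E n)) : Set (E n) :=
  {v | ∀ u ∈ T, omega0 n v u = 0}

/-- `N` is coisotropic: `(T_pN)^{ω₀} ⊆ T_pN` for all `p ∈ N`. -/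
def IsCoisotropic (n : ℕ) (N : Set (E n)) : Prop :=
  ∀ p ∈ N, symplOrth n (TangentSet n N p) ⊆ TangentSet n N p

/-- `N` is Lagrangian: `(T_pN)^{ω₀} = T_pN` for all `p ∈ N`. -/
def IsLagrangian (n : ℕ) (N : Set (E n)) : Prop :=
  ∀ p ∈ N, symplOrth n (TangentSet n N p) = TangentSet n N p

/-- `Σ_N`: Hamiltonian diffeomorphisms preserving `N`. -/
def SigmaGrp (n : ℕ) (N : Set (E n)) : Set (E n → E n) :=
  {φ | φ ∈ HamGrp n Set.univ ∧ φ '' N = N}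

/-- `Σ̄_N`: the closure of `Σ_N` in the Hofer metric. -/
def SigmaBar (n : ℕ) (N : Set (E n)) : Set (E n → E n) :=
  {φ | φ ∈ HamGrp n Set.univ ∧ ∀ ε : ℝ, 0 < ε →
    ∃ ψ ∈ SigmaGrp n N, ∃ χ : E n → E n,
      Function.LeftInverse χ ψ ∧ Function.RightInverse χ ψ ∧
      hoferNorm n Set.univ (χ ∘ φ) < ε}

/-- The rigid locus `R_N = ⋂_{φ ∈ Σ̄_N} φ⁻¹(N)`. -/
def rigidLocus (n : ℕ) (N : Set (E n)) : Set (E n) :=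
  ⋂ φ ∈ SigmaBar n N, φ ⁻¹' N

set_option linter.unusedSectionVars false

namespace CommTrick

open scoped unitInterval ContDiff

/-! ### Superposition operators on continuous curves -/

section Nemytskii

variable {V W : Type} [NormedAddCommGroup V] [NormedSpace ℝ V]
  [NormedAddCommGroup W] [NormedSpace ℝ W]

/-- The partial derivative of `f : ℝ × V → W` in the second variable. -/
def D₂ (f : ℝ × V → W) (p : ℝ × V) : V →L[ℝ] W :=
  (fderiv ℝ f p).comp (ContinuousLinearMap.inr ℝ ℝ V)

lemma contDiff_D₂ {f : ℝ × V → W} (hf : ContDiff ℝ ∞ f) : ContDiff ℝ ∞ (D₂ f) :=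
  (hf.fderiv_right (m := ∞) (by simp)).clm_comp contDiff_const

lemma hasFDerivAt_D₂ {f : ℝ × V → W} (hf : ContDiff ℝ ∞ f) (t : ℝ) (z : V) :
    HasFDerivAt (fun w => f (t, w)) (D₂ f (t, z)) z :=
  ((hf.differentiable (by simp)) (t, z)).hasFDerivAt.comp z (hasFDerivAt_prodMk_right t z)

/-- The superposition (Nemytskii) operator `γ ↦ (t ↦ f (t, γ t))` on continuous curves over
the unit interval. -/
def nem (f : ℝ × V → W) (hf : Continuous f) (γ : C(I, V)) : C(I, W) :=
  ⟨fun t => f (t, γ t), by fun_prop⟩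

@[simp] lemma nem_apply (f : ℝ × V → W) (hf : Continuous f) (γ : C(I, V)) (t : I) :
    nem f hf γ t = f (t, γ t) := rfl

lemma continuous_nem (f : ℝ × V → W) (hf : Continuous f) : Continuous (nem f hf) := by
  refine ContinuousMap.continuous_of_continuous_uncurry _ ?_
  change Continuous fun p : C(I, V) × I => f (p.2, p.1 p.2)
  fun_prop

/-- Pointwise application of a curve of operators to a curve of vectors, as a bounded bilinear
map. -/
def mulOp : C(I, V →L[ℝ] W) →L[ℝ] C(I, V) →L[ℝ] C(I, W) :=
  LinearMap.mkContinuous₂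
    (LinearMap.mk₂ ℝ (fun (A : C(I, V →L[ℝ] W)) (h : C(I, V)) =>
        (⟨fun t => A t (h t), by fun_prop⟩ : C(I, W)))
      (by intros; ext; simp) (by intros; ext; simp) (by intros; ext; simp)
      (by intros; ext; simp)) 1 (by
    intro A h
    rw [ContinuousMap.norm_le _ (by positivity)]
    intro t
    simp only [LinearMap.mk₂_apply, ContinuousMap.coe_mk, one_mul]
    exact ((A t).le_opNorm _).trans
      (mul_le_mul (A.norm_coe_le_norm t) (h.norm_coe_le_norm t) (norm_nonneg _) (norm_nonneg A)))

@[simp] lemma mulOp_apply (A : C(I, V →L[ℝ] W)) (h : C(I, V)) (t : I) :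
    mulOp A h t = A t (h t) := rfl

/-- The superposition operator of `f` is differentiable, with derivative the pointwise
multiplication by `D₂ f (t, γ t)`; the uniformity in `t` comes from the continuity of the
superposition operator of `D₂ f`. -/
lemma hasFDerivAt_nem (f : ℝ × V → W) (hf : ContDiff ℝ ∞ f) (γ : C(I, V)) :
    HasFDerivAt (nem f hf.continuous)
      (mulOp (nem (D₂ f) (contDiff_D₂ hf).continuous γ)) γ := by
  rw [hasFDerivAt_iff_isLittleO_nhds_zero, Asymptotics.isLittleO_iff]
  intro ε hε
  have hc := (continuous_nem (D₂ f) (contDiff_D₂ hf).continuous).continuousAt (x := γ)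
  rw [Metric.continuousAt_iff] at hc
  obtain ⟨δ, hδ, H⟩ := hc ε hε
  filter_upwards [Metric.ball_mem_nhds (0 : C(I, V)) hδ] with h hh
  rw [ContinuousMap.norm_le _ (by positivity)]
  intro t
  have hht : ‖h t‖ < δ := (h.norm_coe_le_norm t).trans_lt (by simpa using hh)
  have key : ∀ y ∈ Metric.ball (γ t) δ, ‖D₂ f (t, y) - D₂ f (t, γ t)‖ ≤ ε := by
    intro y hy
    -- the point `y` is reached by the curve `γ` translated by a constant
    have h1 := H (x := γ + ContinuousMap.const I (y - γ t)) (by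
      rw [dist_eq_norm, add_sub_cancel_left]
      refine (ContinuousMap.norm_lt_iff _ hδ).2 fun s => ?_
      simpa [dist_eq_norm] using hy)
    rw [dist_eq_norm] at h1
    have h2 := (ContinuousMap.norm_coe_le_norm _ t).trans h1.le
    simpa using h2
  have := (convex_ball (γ t) δ).norm_image_sub_le_of_norm_hasFDerivWithin_le'
    (f := fun y => f (t, y)) (φ := D₂ f (t, γ t))
    (fun y _ => (hasFDerivAt_D₂ hf t y).hasFDerivWithinAt) key
    (Metric.mem_ball_self hδ) (y := γ t + h t) (by simpa using hht)
  simp only [add_sub_cancel_left] at this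
  simp only [ContinuousMap.sub_apply, nem_apply, ContinuousMap.add_apply, mulOp_apply]
  exact this.trans (by gcongr; exact h.norm_coe_le_norm t)

lemma contDiff_nem_nat (k : ℕ) : ∀ {W : Type} [NormedAddCommGroup W] [NormedSpace ℝ W]
    (f : ℝ × V → W) (hf : ContDiff ℝ ∞ f), ContDiff ℝ k (nem f hf.continuous) := by
  induction k with
  | zero => intro W _ _ f hf; exact contDiff_zero.2 (continuous_nem _ _)
  | succ k ih =>
    intro W _ _ f hf
    rw [show ((k + 1 : ℕ) : WithTop ℕ∞) = (k : WithTop ℕ∞) + 1 by norm_cast,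
      contDiff_succ_iff_hasFDerivAt]
    have hm : ContDiff ℝ k fun A : C(I, V →L[ℝ] W) => mulOp A := by
      exact ContinuousLinearMap.contDiff (𝕜 := ℝ) (E := C(I, V →L[ℝ] W))
        (F := C(I, V) →L[ℝ] C(I, W)) mulOp
    exact ⟨fun γ => mulOp (nem (D₂ f) (contDiff_D₂ hf).continuous γ),
      hm.comp (ih (D₂ f) (contDiff_D₂ hf)), hasFDerivAt_nem f hf⟩

lemma contDiff_nem (f : ℝ × V → W) (hf : ContDiff ℝ ∞ f) :
    ContDiff ℝ ∞ (nem f hf.continuous) :=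
  contDiff_infty.2 fun k => contDiff_nem_nat k f hf

end Nemytskii

/-! ### The weighted Volterra operator -/

section Volterra

variable {V : Type} [NormedAddCommGroup V] [NormedSpace ℝ V]

/-- The extension of a curve over the unit interval to `ℝ`, constant outside. -/
def curveExt (h : C(I, V)) : ℝ → V := Set.IccExtend zero_le_one h

lemma continuous_curveExt (h : C(I, V)) : Continuous (curveExt h) := h.continuous.Icc_extend'

lemma curveExt_of_mem (h : C(I, V)) {t : ℝ} (ht : t ∈ I) : curveExt h t = h ⟨t, ht⟩ :=
  Set.IccExtend_of_mem _ _ ht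

lemma norm_curveExt_le (h : C(I, V)) (t : ℝ) : ‖curveExt h t‖ ≤ ‖h‖ := h.norm_coe_le_norm _

/-- The weighted Volterra operator `(J h)(t) = e^{-λt} ∫₀ᵗ e^{λs} h(s) ds`; its norm is at most
`1/λ`. -/
def volt (lam : ℝ) (hl : 0 < lam) : C(I, V) →L[ℝ] C(I, V) :=
  LinearMap.mkContinuous
    { toFun := fun h => ⟨fun t => Real.exp (-lam * t) •
          ∫ s in (0:ℝ)..t, Real.exp (lam * s) • curveExt h s, by
        have hc : Continuous fun s => Real.exp (lam * s) • curveExt h s := by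
          have := continuous_curveExt h; fun_prop
        have := intervalIntegral.continuous_primitive (μ := MeasureTheory.volume)
          (fun a b => hc.intervalIntegrable a b) 0
        fun_prop⟩
      map_add' := by
        intro h k
        ext t
        have hc : ∀ h : C(I, V), Continuous fun s => Real.exp (lam * s) • curveExt h s := by
          intro h; have := continuous_curveExt h; fun_prop
        simp only [ContinuousMap.coe_mk, ContinuousMap.add_apply]
        rw [← smul_add, ← intervalIntegral.integral_add ((hc h).intervalIntegrable _ _)
          ((hc k).intervalIntegrable _ _)]
        simp only [← smul_add]
        rfl
      map_smul' := by
        intro c h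
        ext t
        simp only [ContinuousMap.coe_mk, ContinuousMap.smul_apply, RingHom.id_apply]
        rw [smul_comm c, ← intervalIntegral.integral_smul c]
        exact congrArg _ (intervalIntegral.integral_congr fun s _ =>
          smul_comm (Real.exp (lam * s)) c (curveExt h s)) }
    (1 / lam) (by
      intro h
      rw [ContinuousMap.norm_le _ (by positivity)]
      intro t
      change ‖Real.exp (-lam * t) • ∫ s in (0:ℝ)..t, Real.exp (lam * s) • curveExt h s‖ ≤ _
      have h1 : ‖∫ s in (0:ℝ)..t, Real.exp (lam * s) • curveExt h s‖ ≤
          ∫ s in (0:ℝ)..t, Real.exp (lam * s) * ‖h‖ := by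
        refine intervalIntegral.norm_integral_le_of_norm_le t.2.1 ?_ ?_
        · refine Filter.Eventually.of_forall fun s _ => ?_
          rw [norm_smul, Real.norm_of_nonneg (Real.exp_pos _).le]
          gcongr
          exact norm_curveExt_le h s
        · exact Continuous.intervalIntegrable (by fun_prop) _ _
      have h2 : ∫ s in (0:ℝ)..t, Real.exp (lam * s) * ‖h‖ =
          (Real.exp (lam * t) - 1) / lam * ‖h‖ := by
        rw [intervalIntegral.integral_mul_const, intervalIntegral.integral_comp_mul_left _ hl.ne',
          integral_exp]
        simp [div_eq_inv_mul]
      rw [norm_smul, Real.norm_of_nonneg (Real.exp_pos _).le]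
      have h3 : Real.exp (-lam * t) * Real.exp (lam * t) = 1 := by
        rw [← Real.exp_add]; simp
      calc _ ≤ Real.exp (-lam * t) * ((Real.exp (lam * t) - 1) / lam * ‖h‖) := by
            gcongr; exact h1.trans h2.le
        _ = (1 - Real.exp (-lam * t)) * (1 / lam * ‖h‖) := by
            linear_combination (1 / lam * ‖h‖) * h3
        _ ≤ 1 * (1 / lam * ‖h‖) := by
            gcongr; linarith [Real.exp_pos (-lam * t)]
        _ = _ := one_mul _)

lemma volt_apply (lam : ℝ) (hl : 0 < lam) (h : C(I, V)) (t : I) :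
    volt lam hl h t = Real.exp (-lam * t) • ∫ s in (0:ℝ)..t, Real.exp (lam * s) • curveExt h s := rfl

lemma norm_volt_le (lam : ℝ) (hl : 0 < lam) (h : C(I, V)) :
    ‖volt lam hl h‖ ≤ 1 / lam * ‖h‖ :=
  ContinuousLinearMap.le_of_opNorm_le (E := C(I, V)) (F := C(I, V)) (volt lam hl)
    (LinearMap.mkContinuous_norm_le _ (by positivity) _) h

end Volterra

/-! ### Smooth dependence on initial conditions -/

section Flow

/-- Inverse function theorem for an injective perturbation `G` of the identity whose derivative
stays within distance less than one of the identity: a map `S` with `G ∘ S` continuous linear is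
smooth. -/
lemma contDiff_of_comp_eq {V B : Type} [NormedAddCommGroup V] [NormedSpace ℝ V]
    [NormedAddCommGroup B] [NormedSpace ℝ B] [CompleteSpace B] {G : B → B} {T : B → B →L[ℝ] B}
    (hG : ContDiff ℝ ∞ G) (hT : ∀ η, HasFDerivAt G (1 - T η) η) (hT1 : ∀ η, ‖T η‖ < 1)
    (hinj : Function.Injective G) (c : V →L[ℝ] B) (S : V → B) (hS : ∀ z, G (S z) = c z) :
    ContDiff ℝ ∞ S := by
  rw [contDiff_iff_contDiffAt]
  intro z
  let e : B ≃L[ℝ] B := ContinuousLinearEquiv.unitsEquiv ℝ B (Units.oneSub (T (S z)) (hT1 _))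
  have he : HasFDerivAt G (e : B →L[ℝ] B) (S z) := hT (S z)
  have hd := hG.contDiffAt (x := S z)
  have h0 : (∞ : WithTop ℕ∞) ≠ 0 := by simp
  have hl := hd.to_localInverse he h0
  have hr := (hd.hasStrictFDerivAt' he h0).eventually_right_inverse
  rw [hS z] at hl hr
  refine (hl.comp z c.contDiff.contDiffAt).congr_of_eventuallyEq ?_
  filter_upwards [c.continuous.continuousAt.eventually hr] with w hw
  exact hinj ((hS w).trans hw.symm)

variable {V : Type} [NormedAddCommGroup V] [NormedSpace ℝ V]

lemma norm_mulOp_le {A : C(I, V →L[ℝ] V)} {L : ℝ} (hL : 0 ≤ L) (hA : ∀ t, ‖A t‖ ≤ L)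
    (h : C(I, V)) : ‖mulOp A h‖ ≤ L * ‖h‖ := by
  rw [ContinuousMap.norm_le _ (by positivity)]
  intro t
  exact ((A t).le_opNorm _).trans
    (mul_le_mul (hA t) (h.norm_coe_le_norm t) (norm_nonneg _) hL)

/-- The vector field `e^{-λt} X(t, e^{λt} y)` seen by the rescaled curve `e^{-λt} γ(t)`. -/
def rescale (lam : ℝ) (X : ℝ × V → V) (p : ℝ × V) : V :=
  Real.exp (-lam * p.1) • X (p.1, Real.exp (lam * p.1) • p.2)

lemma contDiff_rescale (lam : ℝ) {X : ℝ × V → V} (hX : ContDiff ℝ ∞ X) :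
    ContDiff ℝ ∞ (rescale lam X) := by
  unfold rescale
  fun_prop

lemma D₂_rescale (lam : ℝ) {X : ℝ × V → V} (hX : ContDiff ℝ ∞ X) (t : ℝ) (y : V) :
    D₂ (rescale lam X) (t, y) = D₂ X (t, Real.exp (lam * t) • y) := by
  refine (hasFDerivAt_D₂ (contDiff_rescale lam hX) t y).unique ?_
  have h1 := ((hasFDerivAt_D₂ hX t (Real.exp (lam * t) • y)).comp y
    ((hasFDerivAt_id y).const_smul (Real.exp (lam * t)))).const_smul (Real.exp (-lam * t))
  convert! h1 using 1
  ext v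
  simp [smul_smul, ← Real.exp_add]

/-- The curve `t ↦ e^{-λt} z`, linear in `z`. -/
def decay (lam : ℝ) (hl : 0 < lam) : V →L[ℝ] C(I, V) :=
  LinearMap.mkContinuous
    { toFun := fun z => ⟨fun t => Real.exp (-lam * t) • z, by fun_prop⟩
      map_add' := by intros; ext; simp
      map_smul' := by intro a z; ext t; exact smul_comm _ _ _ } 1 (by
    intro z
    rw [ContinuousMap.norm_le _ (by positivity)]
    intro t
    change ‖Real.exp (-lam * t) • z‖ ≤ _
    rw [norm_smul, Real.norm_of_nonneg (Real.exp_pos _).le]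
    gcongr
    rw [Real.exp_le_one_iff]
    nlinarith [t.2.1])

lemma decay_apply (lam : ℝ) (hl : 0 < lam) (z : V) (t : I) :
    decay lam hl z t = Real.exp (-lam * t) • z := rfl

/-- Smooth dependence on initial conditions, together with the variational equation: for a smooth
time-dependent vector field with bounded space derivative, the maps `Φ t`, `t ∈ [0,1]`, of a flow are smooth
and `W t = D(Φ t)(z) v` solves the linearized equation along `t ↦ Φ t z`.

The curve `e^{-λt} Φ t z` solves `η - J (e^{-λt} X(t, e^{λt} η)) = e^{-λt} z` in the Banach space
of continuous curves, where for large `λ` the left-hand side is a contractive perturbation of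
the identity. -/
theorem flow_smooth [CompleteSpace V] {X : ℝ × V → V} (hX : ContDiff ℝ ∞ X) {L : ℝ}
    (hL : 0 < L) (hXL : ∀ p, ‖D₂ X p‖ ≤ L) {Φ : ℝ → V → V} (h0 : ∀ z, Φ 0 z = z)
    (hΦ : ∀ z t, HasDerivAt (fun s => Φ s z) (X (t, Φ t z)) t) :
    (∀ t ∈ I, ContDiff ℝ ∞ (Φ t)) ∧
    ∀ z v, ∃ W : ℝ → V, W 0 = v ∧ (∀ t ∈ I, W t = fderiv ℝ (Φ t) z v) ∧
      ∀ t ∈ I, HasDerivAt W (D₂ X (t, Φ t z) (W t)) t := by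
  -- the choice `λ = 2 L` makes the integral operator contract by `(1/λ) L = 1/2`
  obtain ⟨lam, hlam⟩ : ∃ lam, lam = 2 * L := ⟨_, rfl⟩
  have hl : 0 < lam := by rw [hlam]; positivity
  have hY := contDiff_rescale lam hX
  have hYL : ∀ p, ‖D₂ (rescale lam X) p‖ ≤ L := fun p => by
    rw [show p = (p.1, p.2) from rfl, D₂_rescale lam hX]; exact hXL _
  let G : C(I, V) → C(I, V) := fun η => η - volt lam hl (nem (rescale lam X) hY.continuous η)
  let T : C(I, V) → C(I, V) →L[ℝ] C(I, V) := fun η =>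
    (volt lam hl).comp (mulOp (nem (D₂ (rescale lam X)) (contDiff_D₂ hY).continuous η))
  have hG : ContDiff ℝ ∞ G := contDiff_id.sub
    ((ContinuousLinearMap.contDiff (𝕜 := ℝ) (E := C(I, V)) (F := C(I, V)) (volt lam hl)).comp
      (contDiff_nem _ hY))
  have hT : ∀ η, HasFDerivAt G (1 - T η) η := fun η =>
    (hasFDerivAt_id η).sub
    ((ContinuousLinearMap.hasFDerivAt (E := C(I, V)) (F := C(I, V)) (volt lam hl)).comp η
      (hasFDerivAt_nem _ hY η))
  have hhalf : 1 / lam * L = 1 / 2 := by rw [hlam]; field_simp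
  have hT1 : ∀ η, ‖T η‖ < 1 := by
    intro η
    refine lt_of_le_of_lt ?_ (show (1 / 2 : ℝ) < 1 by norm_num)
    refine ContinuousLinearMap.opNorm_le_bound _ (by norm_num) fun h => ?_
    have hA : ∀ t, ‖nem (D₂ (rescale lam X)) (contDiff_D₂ hY).continuous η t‖ ≤ L :=
      fun t => hYL (t, η t)
    have h1 := norm_mulOp_le hL.le hA h
    have h2 := mul_le_mul_of_nonneg_left h1 (one_div_pos.2 hl).le
    rw [← mul_assoc, hhalf] at h2
    exact (norm_volt_le lam hl _).trans h2
  have hinj : Function.Injective G := by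
    intro η ζ h
    have h1 : η - ζ = volt lam hl (nem (rescale lam X) hY.continuous η -
        nem (rescale lam X) hY.continuous ζ) := by
      rw [map_sub]
      exact sub_eq_sub_iff_sub_eq_sub.1 h
    have h2 : ‖nem (rescale lam X) hY.continuous η -
        nem (rescale lam X) hY.continuous ζ‖ ≤ L * ‖η - ζ‖ := by
      rw [ContinuousMap.norm_le _ (by positivity)]
      intro t
      have := convex_univ.norm_image_sub_le_of_norm_hasFDerivWithin_le
        (f := fun y => rescale lam X (t, y))
        (fun y _ => (hasFDerivAt_D₂ hY t y).hasFDerivWithinAt) (fun y _ => hYL (t, y))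
        (Set.mem_univ (ζ t)) (Set.mem_univ (η t))
      exact this.trans (by gcongr; exact (η - ζ).norm_coe_le_norm t)
    have h3 : ‖η - ζ‖ ≤ 1 / 2 * ‖η - ζ‖ := by
      conv_lhs => rw [h1]
      refine (norm_volt_le lam hl _).trans ?_
      calc _ ≤ 1 / lam * (L * ‖η - ζ‖) := by
            gcongr
        _ = 1 / 2 * ‖η - ζ‖ := by rw [← mul_assoc, hhalf]
    exact sub_eq_zero.1 (norm_le_zero_iff.1 (by linarith))
  have hcΦ : ∀ z, Continuous fun t => Φ t z := fun z =>
    continuous_iff_continuousAt.2 fun t => (hΦ z t).continuousAt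
  let S : V → C(I, V) := fun z => ⟨fun t => Real.exp (-lam * t) • Φ t z, by
    have := hcΦ z; fun_prop⟩
  have hSt : ∀ z (t : I), S z t = Real.exp (-lam * t) • Φ t z := fun _ _ => rfl
  have hee : ∀ t : ℝ, Real.exp (lam * t) * Real.exp (-lam * t) = 1 := fun t => by
    rw [← Real.exp_add]; simp
  have hGS : ∀ z, G (S z) = decay lam hl z := by
    intro z
    ext t
    change S z t - volt lam hl (nem (rescale lam X) hY.continuous (S z)) t = decay lam hl z t
    rw [volt_apply, decay_apply, hSt, ← smul_sub]
    congr 1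
    have hi : ∫ s in (0:ℝ)..t, Real.exp (lam * s) •
        curveExt (nem (rescale lam X) hY.continuous (S z)) s = ∫ s in (0:ℝ)..t, X (s, Φ s z) := by
      refine intervalIntegral.integral_congr fun s hs => ?_
      rw [Set.uIcc_of_le t.2.1] at hs
      have hs' : s ∈ I := ⟨hs.1, hs.2.trans t.2.2⟩
      simp only [curveExt_of_mem _ hs', nem_apply, rescale, hSt, smul_smul, hee, one_smul]
    rw [hi, intervalIntegral.integral_eq_sub_of_hasDerivAt (fun s _ => hΦ z s), h0]
    · abel
    · have := hcΦ z
      exact (hX.continuous.comp (by fun_prop)).intervalIntegrable _ _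
  have hSsmooth := contDiff_of_comp_eq hG hT hT1 hinj (decay lam hl) S hGS
  -- evaluating the rescaled curves recovers the flow
  let ev : I → C(I, V) →L[ℝ] V := fun t => Real.exp (lam * t) • ContinuousMap.evalCLM ℝ t
  have hev : ∀ t : I, Φ t = fun z => ev t (S z) := by
    intro t
    funext z
    change _ = Real.exp (lam * t) • S z t
    rw [hSt, smul_smul, hee, one_smul]
  refine ⟨fun t ht => ?_, fun z v => ?_⟩
  · rw [hev ⟨t, ht⟩]
    exact (ev _).contDiff.comp hSsmooth
  · have hSd : HasFDerivAt S (fderiv ℝ S z) z :=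
      (hSsmooth.differentiable (by simp) z).hasFDerivAt
    obtain ⟨w, hw⟩ : ∃ w, w = fderiv ℝ S z v := ⟨_, rfl⟩
    -- the integral equation `G (S z) = decay z`, differentiated in the direction `v`
    have hvar : w - T (S z) w = decay lam hl v := by
      have h1 : HasFDerivAt (fun z => G (S z)) ((1 - T (S z)).comp (fderiv ℝ S z)) z :=
        (hT (S z)).comp z hSd
      have h2 : HasFDerivAt (fun z => G (S z)) (decay (V := V) lam hl) z := by
        simp only [hGS]
        exact ContinuousLinearMap.hasFDerivAt (F := C(I, V)) (decay lam hl)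
      rw [← h1.unique h2, hw]
      rfl
    have hc : Continuous fun s => D₂ X (s, Φ s z) (Real.exp (lam * s) • curveExt w s) := by
      have h1 : Continuous fun s => D₂ X (s, Φ s z) :=
        (contDiff_D₂ hX).continuous.comp (by have := hcΦ z; fun_prop)
      have h2 := continuous_curveExt w
      fun_prop
    have hWw : ∀ t ∈ I, v + (∫ s in (0:ℝ)..t, D₂ X (s, Φ s z)
        (Real.exp (lam * s) • curveExt w s)) = Real.exp (lam * t) • curveExt w t := by
      intro t ht
      have h1 := congrArg (fun u : C(I, V) => Real.exp (lam * t) • u ⟨t, ht⟩) hvar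
      simp only [ContinuousMap.sub_apply, decay_apply, T, ContinuousLinearMap.comp_apply,
        volt_apply, smul_sub, smul_smul, hee, one_smul] at h1
      rw [curveExt_of_mem _ ht, ← h1, sub_add_eq_add_sub, sub_eq_iff_eq_add]
      congr 1
      refine intervalIntegral.integral_congr fun s hs => ?_
      rw [Set.uIcc_of_le ht.1] at hs
      have hs' : s ∈ I := ⟨hs.1, hs.2.trans ht.2⟩
      simp only [curveExt_of_mem _ hs', mulOp_apply, nem_apply, D₂_rescale lam hX, hSt,
        smul_smul, hee, one_smul, map_smul]
    refine ⟨fun t => v + ∫ s in (0:ℝ)..t, D₂ X (s, Φ s z)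
        (Real.exp (lam * s) • curveExt w s), by simp, fun t ht => ?_, fun t ht => ?_⟩
    · simp only [hWw t ht]
      have h1 : HasFDerivAt (Φ t) ((ev ⟨t, ht⟩).comp (fderiv ℝ S z)) z := by
        rw [show Φ t = _ from hev ⟨t, ht⟩]
        exact (ev ⟨t, ht⟩).hasFDerivAt.comp z hSd
      rw [h1.fderiv, curveExt_of_mem _ ht, hw]
      rfl
    · simp only [hWw t ht]
      exact (intervalIntegral.integral_hasDerivAt_right (hc.intervalIntegrable _ _)
        hc.stronglyMeasurable.stronglyMeasurableAtFilter hc.continuousAt).const_add v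

end Flow

/-! ### Hamiltonian flows are symplectic -/

section Hamiltonian

variable {n : ℕ}

/-- `omega0` as a bounded bilinear map. -/
def omL (n : ℕ) : E n →L[ℝ] E n →L[ℝ] ℝ :=
  LinearMap.toContinuousLinearMap
    ((LinearMap.toContinuousLinearMap (𝕜 := ℝ) (E := E n) (F' := ℝ)).toLinearMap ∘ₗ
      LinearMap.mk₂ ℝ (omega0 n)
        (by intros; simp [omega0, add_mul, Finset.sum_add_distrib]; ring)
        (by intros; simp [omega0, mul_assoc, Finset.mul_sum, mul_sub])
        (by intros; simp [omega0, mul_add, Finset.sum_add_distrib]; ring)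
        (by intros; simp [omega0, mul_left_comm, Finset.mul_sum, mul_sub]))

@[simp] lemma omL_apply (z w : E n) : omL n z w = omega0 n z w := rfl

lemma omega0_swap (z w : E n) : omega0 n z w = -omega0 n w z := by
  simp [omega0, mul_comm]

lemma omega0_nondegenerate {a b : E n} (h : ∀ v, omega0 n a v = omega0 n b v) : a = b := by
  ext i
  · simpa [omega0, Pi.single_apply] using h (0, Pi.single i 1)
  · simpa [omega0, Pi.single_apply] using h (Pi.single i 1, 0)

/-- The Hamiltonian vector field of `H` as a function of time and space. -/
def XF (H : ℝ × E n → ℝ) (p : ℝ × E n) : E n :=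
  (fun i => D₂ H p (0, Pi.single i 1), fun i => -D₂ H p (Pi.single i 1, 0))

lemma contDiff_XF {H : ℝ × E n → ℝ} (hH : ContDiff ℝ ∞ H) : ContDiff ℝ ∞ (XF H) :=
  (contDiff_pi.2 fun _ => (contDiff_D₂ hH).clm_apply contDiff_const).prodMk
    (contDiff_pi.2 fun _ => ((contDiff_D₂ hH).clm_apply contDiff_const).neg)

lemma XH_eq {H : ℝ × E n → ℝ} (hH : ContDiff ℝ ∞ H) (t : ℝ) (z : E n) :
    XH n H t z = XF H (t, z) := by
  simp only [XH, XF, (hasFDerivAt_D₂ hH t z).fderiv]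

lemma apply_eq_sum (l : E n →L[ℝ] ℝ) (v : E n) :
    l v = ∑ i, l (0, Pi.single i 1) * v.2 i + ∑ i, l (Pi.single i 1, 0) * v.1 i := by
  have h1 : ∀ x : Fin n → ℝ, x = ∑ i, x i • Pi.single i 1 := fun x => by
    simpa [← Pi.single_smul] using (Finset.univ_sum_single x).symm
  have hv : v = ∑ i, v.1 i • ((Pi.single i 1, 0) : E n) +
      ∑ i, v.2 i • ((0, Pi.single i 1) : E n) := by
    refine Prod.ext ?_ ?_
    · simpa [Prod.fst_sum] using h1 v.1
    · simpa [Prod.snd_sum] using h1 v.2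
  conv_lhs => rw [hv]
  simp only [map_add, map_sum, map_smul, smul_eq_mul]
  rw [add_comm]
  simp only [mul_comm]

/-- The defining property `ω₀(X_H, ·) = dH` of the Hamiltonian vector field. -/
lemma omega0_XF (H : ℝ × E n → ℝ) (p : ℝ × E n) (v : E n) :
    omega0 n (XF H p) v = D₂ H p v := by
  rw [apply_eq_sum (D₂ H p) v]
  simp [omega0, XF]

/-- The linearized Hamiltonian vector field is infinitesimally symplectic, by the symmetry of the
Hessian. -/
lemma omega0_D₂_XF {H : ℝ × E n → ℝ} (hH : ContDiff ℝ ∞ H) (t : ℝ) (z u v : E n) :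
    omega0 n (D₂ (XF H) (t, z) u) v + omega0 n u (D₂ (XF H) (t, z) v) = 0 := by
  have hf : ContDiff ℝ ∞ fun w => H (t, w) := hH.comp (contDiff_prodMk_right t)
  have hs : ∀ u v, omega0 n (D₂ (XF H) (t, z) u) v =
      fderiv ℝ (fderiv ℝ fun w => H (t, w)) z u v := by
    intro u v
    have h1 : HasFDerivAt (fun w => omL n (XF H (t, w)) v)
        (((omL n).comp (D₂ (XF H) (t, z))).flip v) z := by
      have := ((omL n).hasFDerivAt.comp z (hasFDerivAt_D₂ (contDiff_XF hH) t z)).clm_apply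
        (hasFDerivAt_const v z)
      convert! this using 1
      ext x
      · simp
      · simp
    have h2 : HasFDerivAt (fun w => fderiv ℝ (fun w => H (t, w)) w v)
        ((fderiv ℝ (fderiv ℝ fun w => H (t, w)) z).flip v) z := by
      have hd : HasFDerivAt (fderiv ℝ fun w => H (t, w))
          (fderiv ℝ (fderiv ℝ fun w => H (t, w)) z) z :=
        ((hf.fderiv_right (m := ∞) (by simp)).differentiable (by simp) z).hasFDerivAt
      have := hd.clm_apply (hasFDerivAt_const v z)
      convert! this using 1
      ext x
      · simp
      · simp
    have he : (fun w => omL n (XF H (t, w)) v) = fun w => fderiv ℝ (fun w => H (t, w)) w v := by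
      funext w
      rw [omL_apply, omega0_XF, (hasFDerivAt_D₂ hH t w).fderiv]
    rw [he] at h1
    have := DFunLike.congr_fun (h1.unique h2) u
    simpa using this
  have hsymm := (hf.contDiffAt (x := z)).isSymmSndFDerivAt (by
    simp only [minSmoothness_of_isRCLikeNormedField]; exact WithTop.coe_le_coe.2 le_top)
  rw [omega0_swap u, hs, hs, hsymm.eq u v]
  simp

lemma XF_eq_zero {H : ℝ × E n → ℝ} {p : ℝ × E n} (hp : p ∉ tsupport H) : XF H p = 0 := by
  have h0 : fderiv ℝ H p = 0 := by
    by_contra h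
    exact hp (support_fderiv_subset ℝ h)
  ext i <;> simp [XF, D₂, h0]

lemma exists_bound_D₂_XF {W : Set (E n)} {H : ℝ × E n → ℝ} (hA : AdmissibleH n W H) :
    ∃ L : ℝ, 0 < L ∧ ∀ p, ‖D₂ (XF H) p‖ ≤ L := by
  have hc : HasCompactSupport (XF H) :=
    HasCompactSupport.intro hA.2.1 fun p hp => XF_eq_zero hp
  have hc2 : HasCompactSupport (D₂ (XF H)) :=
    (hc.fderiv ℝ).comp_left (g := fun l : (ℝ × E n) →L[ℝ] E n =>
      l.comp (ContinuousLinearMap.inr ℝ ℝ (E n))) (by simp)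
  obtain ⟨C, hC⟩ := hc2.exists_bound_of_continuous (contDiff_D₂ (contDiff_XF hA.1)).continuous
  exact ⟨max C 1, by positivity, fun p => (hC p).trans (le_max_left _ _)⟩

/-- Elements of `Ham(W)` are smooth and symplectic. -/
theorem ham_smooth_symplectic {W : Set (E n)} {ψ : E n → E n} (hψ : ψ ∈ HamGrp n W) :
    ContDiff ℝ ∞ ψ ∧
      ∀ z u v, omega0 n (fderiv ℝ ψ z u) (fderiv ℝ ψ z v) = omega0 n u v := by
  obtain ⟨H, Φ, hA, ⟨h0, hΦ⟩, rfl⟩ := hψ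
  obtain ⟨L, hL, hb⟩ := exists_bound_D₂_XF hA
  simp only [XH_eq hA.1] at hΦ
  obtain ⟨hs, hW⟩ := flow_smooth (contDiff_XF hA.1) hL hb h0 hΦ
  have h1 : (1 : ℝ) ∈ I := by simp
  refine ⟨hs 1 h1, fun z u v => ?_⟩
  obtain ⟨A, hA0, hA1, hA2⟩ := hW z u
  obtain ⟨B, hB0, hB1, hB2⟩ := hW z v
  have hd : ∀ t ∈ I, HasDerivAt (fun t => omL n (A t) (B t)) 0 t := by
    intro t ht
    have h2 := ((omL n).hasFDerivAt.comp_hasDerivAt t (hA2 t ht)).clm_apply (hB2 t ht)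
    convert! h2 using 1
    exact (omega0_D₂_XF hA.1 t (Φ t z) (A t) (B t)).symm
  have hc := constant_of_has_deriv_right_zero (f := fun t => omL n (A t) (B t)) (a := 0) (b := 1)
    (fun t ht => (hd t ht).continuousAt.continuousWithinAt)
    (fun t ht => (hd t ⟨ht.1, ht.2.le⟩).hasDerivWithinAt) 1 h1
  simp only [omL_apply, hA0, hB0, hA1 1 h1, hB1 1 h1] at hc
  exact hc

lemma H_eq_zero {W : Set (E n)} {H : ℝ × E n → ℝ} (hA : AdmissibleH n W H) {t : ℝ}
    (ht : t ≤ 0 ∨ 1 ≤ t) (z : E n) : H (t, z) = 0 := by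
  have hcl : IsClosed {s | H (s, z) = 0} :=
    isClosed_eq (hA.1.continuous.comp (by fun_prop)) continuous_const
  have hout : ∀ s, s ∉ Set.Icc (0 : ℝ) 1 → H (s, z) = 0 := fun s hs => by
    by_contra h
    exact hs (hA.2.2 (subset_tsupport H h)).1
  rcases ht with ht | ht
  · have := closure_minimal (s := Set.Iio (0 : ℝ)) (fun s hs => hout s fun h => hs.not_ge h.1) hcl
    rw [closure_Iio] at this
    exact this ht
  · have := closure_minimal (s := Set.Ioi (1 : ℝ)) (fun s hs => hout s fun h => hs.not_ge h.2) hcl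
    rw [closure_Ioi] at this
    exact this ht

lemma XH_eq_zero {H : ℝ × E n → ℝ} {t : ℝ} (h : ∀ z, H (t, z) = 0) (z : E n) :
    XH n H t z = 0 := by
  ext i <;> simp [XH, h]

/-- The flow is stationary before time zero, where the Hamiltonian vanishes. -/
lemma flow_of_nonpos {W : Set (E n)} {H : ℝ × E n → ℝ} (hA : AdmissibleH n W H)
    {Φ : ℝ → E n → E n} (hΦ : IsHamFlow n H Φ) {t : ℝ} (ht : t ≤ 0) (z : E n) : Φ t z = z := by
  have h := (convex_Iic (0 : ℝ)).norm_image_sub_le_of_norm_hasDerivWithin_le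
    (f := fun s => Φ s z) (f' := fun _ => 0) (C := 0)
    (fun s hs => by
      have := (hΦ.2 z s).hasDerivWithinAt (s := Set.Iic 0)
      rwa [XH_eq_zero (H_eq_zero hA (Or.inl hs))] at this)
    (by simp) (Set.mem_Iic.2 le_rfl) (Set.mem_Iic.2 ht)
  simp only [zero_mul, hΦ.1] at h
  exact sub_eq_zero.1 (norm_le_zero_iff.1 h)

/-- The flow fixes the points outside `W`, where the vector field vanishes. -/
lemma flow_of_notMem {W : Set (E n)} {H : ℝ × E n → ℝ} (hA : AdmissibleH n W H)
    {Φ : ℝ → E n → E n} (hΦ : IsHamFlow n H Φ) {z : E n} (hz : z ∉ W) (t : ℝ) : Φ t z = z := by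
  obtain ⟨L, hL, hb⟩ := exists_bound_D₂_XF hA
  have hlip : ∀ t, LipschitzOnWith L.toNNReal (fun w => XF H (t, w)) Set.univ := fun t =>
    convex_univ.lipschitzOnWith_of_nnnorm_hasFDerivWithin_le
      (fun w _ => (hasFDerivAt_D₂ (contDiff_XF hA.1) t w).hasFDerivWithinAt)
      (fun w _ => by
        rw [← NNReal.coe_le_coe, Real.coe_toNNReal _ hL.le]
        exact hb _)
  have := ODE_solution_unique_univ (v := fun t w => XF H (t, w)) (f := fun t => Φ t z)
    (g := fun _ => z) (t₀ := 0) hlip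
    (fun t => ⟨by have := hΦ.2 z t; rwa [XH_eq hA.1] at this, trivial⟩)
    (fun t => ⟨by
      rw [XF_eq_zero fun h => hz (hA.2.2 h).2]
      exact hasDerivAt_const _ _, trivial⟩) (hΦ.1 z)
  exact congrFun this t

lemma XH_reparam (H : ℝ × E n → ℝ) (c a b t : ℝ) (z : E n) :
    XH n (fun p => c * H (a + b * p.1, p.2)) t z = c • XH n H (a + b * t) z := by
  have : fderiv ℝ (fun w => c * H (a + b * t, w)) z =
      c • fderiv ℝ (fun w => H (a + b * t, w)) z :=
    congrFun (fderiv_const_smul_field (f := fun w => H (a + b * t, w)) c) z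
  ext i <;> simp [XH, this]

/-- Running the flow backwards shows that `Ham(W)` is closed under inverses. -/
lemma ham_inv {W : Set (E n)} {ψ ψinv : E n → E n} (hψ : ψ ∈ HamGrp n W)
    (h : Function.RightInverse ψinv ψ) (h' : Function.LeftInverse ψinv ψ) :
    ψinv ∈ HamGrp n W := by
  obtain ⟨H, Φ, hA, hΦ, rfl⟩ := hψ
  let e : ℝ × E n ≃ₜ ℝ × E n := (Homeomorph.subLeft (1 : ℝ)).prodCongr (Homeomorph.refl _)
  refine ⟨fun p => -1 * H (1 + -1 * p.1, p.2), fun t z => Φ (1 + -1 * t) (ψinv z),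
    ⟨?_, ?_⟩, ⟨?_, ?_⟩, ?_⟩
  · have := hA.1
    fun_prop
  · have hsub : tsupport (fun p : ℝ × E n => -1 * H (1 + -1 * p.1, p.2)) ⊆
        e ⁻¹' tsupport H := by
      refine closure_minimal (fun p hp => subset_tsupport H ?_)
        ((isClosed_tsupport H).preimage e.continuous)
      have h2 : H (1 + -1 * p.1, p.2) ≠ 0 := fun h0 => hp (by simp only [h0, mul_zero])
      have h3 : e p = (1 + -1 * p.1, p.2) := Prod.ext (by simp [e]; ring) rfl
      rw [Function.mem_support, h3]
      exact h2
    refine ⟨(e.isCompact_preimage.2 hA.2.1).of_isClosed_subset (isClosed_tsupport _) hsub,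
      fun p hp => ?_⟩
    obtain ⟨h1, h2⟩ := hA.2.2 (hsub hp)
    have h3 : 0 ≤ 1 - p.1 ∧ 1 - p.1 ≤ 1 := h1
    exact ⟨⟨by linarith, by linarith⟩, h2⟩
  · intro z
    simpa using h z
  · intro z t
    rw [XH_reparam]
    have h1 : HasDerivAt (fun s : ℝ => 1 + -1 * s) (-1) t := by
      simpa using ((hasDerivAt_id t).const_mul (-1)).const_add 1
    exact (hΦ.2 (ψinv z) (1 + -1 * t)).scomp t h1
  · funext z
    simp [hΦ.1]

end Hamiltonian

/-! ### The Hamiltonian of the commutator and its energy -/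

section Energy

variable {n : ℕ}

lemma XH_congr {H K : ℝ × E n → ℝ} {t : ℝ} (h : ∀ z, H (t, z) = K (t, z)) :
    XH n H t = XH n K t := by
  funext z
  simp only [XH, h]

/-- Hamiltonian vector fields transform naturally under a symplectomorphism `ψ`. -/
lemma XH_conj {ψ ψinv : E n → E n} (hψ : ContDiff ℝ ∞ ψ) (hψi : ContDiff ℝ ∞ ψinv)
    (hsymp : ∀ z u v, omega0 n (fderiv ℝ ψ z u) (fderiv ℝ ψ z v) = omega0 n u v)
    (h₁ : Function.LeftInverse ψinv ψ) (h₂ : Function.RightInverse ψinv ψ)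
    {H : ℝ × E n → ℝ} (hH : ContDiff ℝ ∞ H) (t : ℝ) (z : E n) :
    XH n (fun p => H (p.1, ψinv p.2)) t (ψ z) = fderiv ℝ ψ z (XH n H t z) := by
  have hK : ContDiff ℝ ∞ fun p : ℝ × E n => H (p.1, ψinv p.2) := by fun_prop
  have hdψ : ∀ w, HasFDerivAt ψ (fderiv ℝ ψ w) w := fun w =>
    (hψ.differentiable (by simp) w).hasFDerivAt
  have hdψi : ∀ w, HasFDerivAt ψinv (fderiv ℝ ψinv w) w := fun w =>
    (hψi.differentiable (by simp) w).hasFDerivAt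
  rw [XH_eq hK, XH_eq hH]
  refine omega0_nondegenerate fun v => ?_
  obtain ⟨u, rfl⟩ : ∃ u, fderiv ℝ ψ z u = v := by
    refine ⟨fderiv ℝ ψinv (ψ z) v, ?_⟩
    have h3 : HasFDerivAt ψ (fderiv ℝ ψ z) (ψinv (ψ z)) := by rw [h₁ z]; exact hdψ z
    have h4 := h3.comp (ψ z) (hdψi (ψ z))
    have h5 : ψ ∘ ψinv = id := funext h₂
    rw [h5] at h4
    exact DFunLike.congr_fun (h4.unique (hasFDerivAt_id (ψ z))) v
  rw [hsymp, omega0_XF, omega0_XF]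
  have h3 := (hasFDerivAt_D₂ hK t (ψ z)).comp z (hdψ z)
  have h4 : (fun w => H (t, ψinv w)) ∘ ψ = fun w => H (t, w) := by
    funext w
    simp [h₁ w]
  have h5 := (show HasFDerivAt (fun w => H (t, w)) _ z from h4 ▸ h3).unique
    (hasFDerivAt_D₂ hH t z)
  exact DFunLike.congr_fun h5 u

/-- The oscillation `sup H(t,·) - inf H(t,·)`. -/
def osc (H : ℝ × E n → ℝ) (t : ℝ) : ℝ :=
  sSup (Set.range fun z => H (t, z)) - sInf (Set.range fun z => H (t, z))

lemma HNorm_eq (H : ℝ × E n → ℝ) : HNorm n H = ∫ t in (0:ℝ)..1, osc H t := rfl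

/-- All values of an admissible Hamiltonian are attained on a fixed compact set. -/
lemma exists_compact_range {W : Set (E n)} {H : ℝ × E n → ℝ} (hA : AdmissibleH n W H) :
    ∃ K : Set (E n), IsCompact K ∧
      ∀ t, Set.range (fun z => H (t, z)) = (fun z => H (t, z)) '' K := by
  have hS : IsCompact (Prod.snd '' tsupport H) := hA.2.1.image continuous_snd
  have hz : ∀ t z, z ∉ Prod.snd '' tsupport H → H (t, z) = 0 := fun t z hz => by
    by_contra h
    exact hz ⟨(t, z), subset_tsupport H h, rfl⟩
  by_cases hp : ∃ p, p ∉ Prod.snd '' tsupport H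
  · obtain ⟨p, hp⟩ := hp
    refine ⟨insert p (Prod.snd '' tsupport H), hS.insert p, fun t => ?_⟩
    refine Set.Subset.antisymm ?_ (Set.image_subset_range _ _)
    rintro _ ⟨z, rfl⟩
    by_cases h : z ∈ Prod.snd '' tsupport H
    · exact ⟨z, Or.inr h, rfl⟩
    · exact ⟨p, Or.inl rfl, by simp only [hz t p hp, hz t z h]⟩
  · push Not at hp
    refine ⟨_, hS, fun t => ?_⟩
    rw [Set.eq_univ_of_forall hp, Set.image_univ]

lemma continuous_osc {W : Set (E n)} {H : ℝ × E n → ℝ} (hA : AdmissibleH n W H) :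
    Continuous (osc H) := by
  obtain ⟨K, hK, hr⟩ := exists_compact_range hA
  have hc : Continuous ↿(fun (t : ℝ) (z : E n) => H (t, z)) := hA.1.continuous
  unfold osc
  simp only [hr]
  exact (hK.continuous_sSup hc).sub (hK.continuous_sInf hc)

lemma osc_nonneg {W : Set (E n)} {H : ℝ × E n → ℝ} (hA : AdmissibleH n W H) (t : ℝ) :
    0 ≤ osc H t := by
  obtain ⟨K, hK, hr⟩ := exists_compact_range hA
  have hc : IsCompact (Set.range fun z => H (t, z)) := by
    rw [hr]
    exact hK.image (hA.1.continuous.comp (by fun_prop))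
  exact sub_nonneg.2 (Real.sInf_le_sSup _ hc.bddBelow hc.bddAbove)

lemma HNorm_nonneg {W : Set (E n)} {H : ℝ × E n → ℝ} (hA : AdmissibleH n W H) :
    0 ≤ HNorm n H :=
  intervalIntegral.integral_nonneg zero_le_one fun t _ => osc_nonneg hA t

open scoped Pointwise in
/-- The oscillation scales by `|c|` and is invariant under a change of variables in space. -/
lemma osc_smul_comp {H K : ℝ × E n → ℝ} {t s : ℝ} (c : ℝ) {f : E n → E n}
    (hf : Function.Surjective f) (h : ∀ z, K (t, z) = c * H (s, f z)) :
    osc K t = |c| * osc H s := by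
  have hr : Set.range (fun z => K (t, z)) = c • Set.range (fun z => H (s, z)) := by
    rw [← hf.range_comp fun z => H (s, z), ← Set.image_smul, ← Set.range_comp]
    simp only [h]
    rfl
  unfold osc
  rw [hr]
  rcases le_total 0 c with hc | hc
  · rw [Real.sSup_smul_of_nonneg hc, Real.sInf_smul_of_nonneg hc, abs_of_nonneg hc]
    simp only [smul_eq_mul]
    ring
  · rw [Real.sSup_smul_of_nonpos hc, Real.sInf_smul_of_nonpos hc, abs_of_nonpos hc]
    simp only [smul_eq_mul]
    ring

/-- The Hamiltonian generating `ψ φ ψ⁻¹ φ⁻¹`: on `[0,1/2]` the time-reversed `H`, at double speed,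
and on `[1/2,1]` the Hamiltonian `H ∘ ψ⁻¹`, at double speed. Since `H` vanishes for `t ≤ 0`, the
two summands never overlap. -/
def commH (H : ℝ × E n → ℝ) (ψinv : E n → E n) (p : ℝ × E n) : ℝ :=
  -2 * H (1 + -2 * p.1, p.2) + 2 * H (-1 + 2 * p.1, ψinv p.2)

lemma commH_left {W : Set (E n)} {H : ℝ × E n → ℝ} (hA : AdmissibleH n W H)
    (ψinv : E n → E n) {t : ℝ} (ht : t ≤ 1 / 2) (z : E n) :
    commH H ψinv (t, z) = -2 * H (1 + -2 * t, z) := by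
  simp only [commH, H_eq_zero hA (t := -1 + 2 * t) (Or.inl (by linarith)), mul_zero, add_zero]

lemma commH_right {W : Set (E n)} {H : ℝ × E n → ℝ} (hA : AdmissibleH n W H)
    (ψinv : E n → E n) {t : ℝ} (ht : 1 / 2 ≤ t) (z : E n) :
    commH H ψinv (t, z) = 2 * H (-1 + 2 * t, ψinv z) := by
  simp only [commH, H_eq_zero hA (t := 1 + -2 * t) (Or.inl (by linarith)), mul_zero, zero_add]

lemma admissible_commH {H : ℝ × E n → ℝ} (hA : AdmissibleH n Set.univ H)
    {ψ ψinv : E n → E n} (hψ : Continuous ψ) (hψi : ContDiff ℝ ∞ ψinv)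
    (h₂ : Function.RightInverse ψinv ψ) : AdmissibleH n Set.univ (commH H ψinv) := by
  have hS : IsCompact (Prod.snd '' tsupport H) := hA.2.1.image continuous_snd
  have hC : IsCompact (Set.Icc (0 : ℝ) 1 ×ˢ
      (Prod.snd '' tsupport H ∪ ψ '' (Prod.snd '' tsupport H))) :=
    isCompact_Icc.prod (hS.union (hS.image hψ))
  have hsub : tsupport (commH H ψinv) ⊆ Set.Icc (0 : ℝ) 1 ×ˢ
      (Prod.snd '' tsupport H ∪ ψ '' (Prod.snd '' tsupport H)) := by
    refine closure_minimal (fun p hp => ?_) hC.isClosed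
    have hp' : commH H ψinv (p.1, p.2) ≠ 0 := hp
    rcases le_total p.1 (1 / 2) with ht | ht
    · rw [commH_left hA ψinv ht] at hp'
      have h1 := subset_tsupport H (right_ne_zero_of_mul hp')
      obtain ⟨h2, h3⟩ := (hA.2.2 h1).1
      exact ⟨⟨by simp only at h3; linarith, by linarith⟩, Or.inl ⟨_, h1, rfl⟩⟩
    · rw [commH_right hA ψinv ht] at hp'
      have h1 := subset_tsupport H (right_ne_zero_of_mul hp')
      obtain ⟨h2, h3⟩ := (hA.2.2 h1).1
      exact ⟨⟨by linarith, by simp only at h3; linarith⟩,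
        Or.inr ⟨ψinv p.2, ⟨_, h1, rfl⟩, h₂ p.2⟩⟩
  refine ⟨?_, hC.of_isClosed_subset (isClosed_tsupport _) hsub, fun p hp =>
    ⟨(hsub hp).1, trivial⟩⟩
  have := hA.1
  unfold commH
  fun_prop

lemma HNorm_commH {H : ℝ × E n → ℝ} (hA : AdmissibleH n Set.univ H) {ψinv : E n → E n}
    (hs : Function.Surjective ψinv) (hK : AdmissibleH n Set.univ (commH H ψinv)) :
    HNorm n (commH H ψinv) = 2 * HNorm n H := by
  have hc := continuous_osc hK
  have hl : ∫ t in (0:ℝ)..(1/2), osc (commH H ψinv) t = ∫ t in (0:ℝ)..1, osc H t := by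
    have h1 : ∫ t in (0:ℝ)..(1/2), osc (commH H ψinv) t =
        ∫ t in (0:ℝ)..(1/2), 2 * osc H (1 - 2 * t) := by
      refine intervalIntegral.integral_congr fun t ht => ?_
      rw [Set.uIcc_of_le (by norm_num)] at ht
      have := osc_smul_comp (-2) Function.surjective_id (commH_left hA ψinv ht.2)
      simp only [this]
      norm_num [sub_eq_add_neg]
    rw [h1, intervalIntegral.integral_const_mul,
      intervalIntegral.integral_comp_sub_mul _ two_ne_zero]
    norm_num
    ring
  have hr : ∫ t in (1/2:ℝ)..1, osc (commH H ψinv) t = ∫ t in (0:ℝ)..1, osc H t := by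
    have h1 : ∫ t in (1/2:ℝ)..1, osc (commH H ψinv) t =
        ∫ t in (1/2:ℝ)..1, 2 * osc H (2 * t - 1) := by
      refine intervalIntegral.integral_congr fun t ht => ?_
      rw [Set.uIcc_of_le (by norm_num)] at ht
      have := osc_smul_comp 2 hs (commH_right hA ψinv ht.1)
      simp only [this]
      rw [show -1 + 2 * t = 2 * t - 1 by ring]
      norm_num
    rw [h1, intervalIntegral.integral_const_mul,
      intervalIntegral.integral_comp_mul_sub _ two_ne_zero]
    norm_num
    ring
  rw [HNorm_eq, HNorm_eq, ← intervalIntegral.integral_add_adjacent_intervals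
    (hc.intervalIntegrable 0 (1 / 2)) (hc.intervalIntegrable (1 / 2) 1), hl, hr, two_mul]

/-- The flow of `commH`. Of the two curves being added, one is always constant equal to
`φ⁻¹ z`, which is then subtracted. -/
lemma isHamFlow_commH {H : ℝ × E n → ℝ} (hA : AdmissibleH n Set.univ H)
    {Φ : ℝ → E n → E n} (hΦ : IsHamFlow n H Φ) {ψ ψinv φinv : E n → E n}
    (hψ : ContDiff ℝ ∞ ψ) (hψi : ContDiff ℝ ∞ ψinv)
    (hsymp : ∀ z u v, omega0 n (fderiv ℝ ψ z u) (fderiv ℝ ψ z v) = omega0 n u v)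
    (h₁ : Function.LeftInverse ψinv ψ) (h₂ : Function.RightInverse ψinv ψ)
    (h₃ : Function.RightInverse φinv (Φ 1)) :
    IsHamFlow n (commH H ψinv) fun t z =>
      Φ (1 + -2 * t) (φinv z) + ψ (Φ (-1 + 2 * t) (ψinv (φinv z))) - φinv z := by
  have hleft : ∀ t z, t ≤ 1 / 2 → ψ (Φ (-1 + 2 * t) (ψinv (φinv z))) = φinv z := fun t z ht => by
    rw [flow_of_nonpos hA hΦ (by linarith), h₂]
  have hright : ∀ t z, 1 / 2 ≤ t → Φ (1 + -2 * t) (φinv z) = φinv z := fun t z ht =>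
    flow_of_nonpos hA hΦ (by linarith) _
  refine ⟨fun z => ?_, fun z t => ?_⟩
  · simp only
    rw [hleft 0 z (by norm_num), add_sub_cancel_right]
    simpa using h₃ z
  have hdA : HasDerivAt (fun s => Φ (1 + -2 * s) (φinv z))
      ((-2 : ℝ) • XH n H (1 + -2 * t) (Φ (1 + -2 * t) (φinv z))) t := by
    have h4 : HasDerivAt (fun s : ℝ => 1 + -2 * s) (-2) t := by
      simpa using ((hasDerivAt_id t).const_mul (-2)).const_add 1
    exact (hΦ.2 (φinv z) (1 + -2 * t)).scomp t h4
  have hdB : HasDerivAt (fun s => ψ (Φ (-1 + 2 * s) (ψinv (φinv z))))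
      ((2 : ℝ) • XH n (fun p => H (p.1, ψinv p.2)) (-1 + 2 * t)
        (ψ (Φ (-1 + 2 * t) (ψinv (φinv z))))) t := by
    have h4 : HasDerivAt (fun s : ℝ => -1 + 2 * s) 2 t := by
      simpa using ((hasDerivAt_id t).const_mul 2).const_add (-1)
    have h5 := (hΦ.2 (ψinv (φinv z)) (-1 + 2 * t)).scomp t h4
    have h6 := ((hψ.differentiable (by simp) _).hasFDerivAt).comp_hasDerivAt t h5
    rw [XH_conj hψ hψi hsymp h₁ h₂ hA.1, ← map_smul]
    exact h6
  have hd := (hdA.add hdB).sub_const (φinv z)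
  convert! hd using 1
  beta_reduce
  rcases le_total t (1 / 2) with ht | ht
  · rw [XH_congr (K := fun p => -2 * H (1 + -2 * p.1, p.2)) (commH_left hA ψinv ht),
      XH_reparam, hleft t z ht, add_sub_cancel_right,
      XH_eq_zero (H := fun p => H (p.1, ψinv p.2))
        fun w => H_eq_zero hA (Or.inl (by linarith)) _]
    simp
  · rw [XH_congr (K := fun p => 2 * H (-1 + 2 * p.1, ψinv p.2)) (commH_right hA ψinv ht),
      XH_reparam (fun q => H (q.1, ψinv q.2)) 2 (-1) 2 t, hright t z ht, add_sub_cancel_left,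
      XH_eq_zero (H := H) fun w => H_eq_zero hA (Or.inl (by linarith)) _]
    simp

end Energy

end CommTrick

/-- the commutator trick. -/
theorem commutator_preserves_and_energy_bound
    (n : ℕ) (hn : 1 ≤ n) (N : Set (E n)) (hN : IsClosed N)
    (U : Set (E n)) (hU : IsOpen U)
    (ψ : E n → E n) (hψ : ψ ∈ HamGrp n U)
    (φ : E n → E n) (hφ : φ ∈ HamGrp n Set.univ)
    (hdisp : φ '' closure U ∩ N = ∅)
    (ψinv φinv : E n → E n)
    (hψi₁ : Function.LeftInverse ψinv ψ) (hψi₂ : Function.RightInverse ψinv ψ)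
    (hφi₁ : Function.LeftInverse φinv φ) (hφi₂ : Function.RightInverse φinv φ) :
    (ψ ∘ φ ∘ ψinv ∘ φinv) '' N = ψ '' N ∧
      hoferNorm n Set.univ (ψ ∘ φ ∘ ψinv ∘ φinv) ≤ 2 * hoferNorm n Set.univ φ := by
  have hψinv := CommTrick.ham_inv hψ hψi₂ hψi₁
  constructor
  · -- `ψ⁻¹` fixes `φ⁻¹ x` for `x ∈ N`, so the commutator agrees with `ψ` on `N`
    refine Set.image_congr fun x hx => ?_
    have hxU : φinv x ∉ U := fun h => by
      have : x ∈ φ '' closure U ∩ N := ⟨⟨φinv x, subset_closure h, hφi₂ x⟩, hx⟩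
      rw [hdisp] at this
      exact this
    have hfix : ψinv (φinv x) = φinv x := by
      obtain ⟨H, Φ, hA, hΦ, hΦ1⟩ := hψinv
      rw [hΦ1]
      exact CommTrick.flow_of_notMem hA hΦ hxU 1
    simp only [Function.comp_apply, hfix, hφi₂ x]
  · obtain ⟨hsm, hsymp⟩ := CommTrick.ham_smooth_symplectic hψ
    have hsmi := (CommTrick.ham_smooth_symplectic hψinv).1
    suffices h : hoferNorm n Set.univ (ψ ∘ φ ∘ ψinv ∘ φinv) / 2 ≤ hoferNorm n Set.univ φ by
      linarith
    refine le_csInf ?_ ?_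
    · obtain ⟨H, Φ, hA, hΦ, hΦ1⟩ := hφ
      exact ⟨_, H, Φ, hA, hΦ, hΦ1, rfl⟩
    · rintro c ⟨H, Φ, hA, hΦ, rfl, rfl⟩
      have hK := CommTrick.admissible_commH hA hsm.continuous hsmi hψi₂
      have hle : hoferNorm n Set.univ (ψ ∘ Φ 1 ∘ ψinv ∘ φinv) ≤ 2 * HNorm n H := by
        rw [← CommTrick.HNorm_commH hA hψi₁.surjective hK]
        refine csInf_le ⟨0, ?_⟩ ⟨_, _, hK,
          CommTrick.isHamFlow_commH hA hΦ hsm hsmi hsymp hψi₁ hψi₂ hφi₂, ?_, rfl⟩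
        · rintro c ⟨H', Φ', hA', -, -, rfl⟩
          exact CommTrick.HNorm_nonneg hA'
        · funext z
          simp only [Function.comp_apply]
          rw [CommTrick.flow_of_nonpos hA hΦ (t := 1 + -2 * 1) (by norm_num),
            add_sub_cancel_left]
          norm_num
      linarith
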